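/- Let G : ℝⁿ → ℝ be differentiable with G(0) = 0 and suppose there exists μ > 2 such that 0 < μ·G(x) ≤ ⟨∇G(x), x⟩ for all x ≠ 0. Let a : ℝ → ℝ be continuous with m := inf{a(t)·G(x) : t ∈ ℝ, |x| = 1} > 0, and let f : ℝ → ℝⁿ be continuous and square integrable. Fix k ∈ ℕ, k ≥ 1, and define for a 2k-periodic C¹ function q the functional I_k(q) = (1/2)·∫_{−k}^{k} (|q(t)|² + |q̇(t)|²) dt − ∫_{−k}^{k} a(t)·G(q(t)) dt + ∫_{−k}^{k} ⟨f(t), q(t)⟩ dt. Then for every ζ ∈ ℝ \ {0} and every 2k-periodic C¹ function q not identically zero, I_k(ζ·q) ≤ (ζ²/2)·‖q‖²_{E_k} − m·|ζ|^μ·∫_{−k}^{k} |q(t)|^μ dt + |ζ|·‖f‖_{L²(ℝ)}·‖q‖_{E_k} + 2k·m, where ‖q‖_{E_k} = (∫_{−k}^{k} (|q|² + |q̇|²) dt)^{1/2}. In particular, for any fixed such q the quantity I_k(ζ·q) tends to −∞ as |ζ| → ∞. -/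

import Mathlib

/-!
The Ambrosetti–Rabinowitz inequality `μ G(x) ≤ ⟨∇G(x), x⟩` says that `s ↦ G(s u) s ^ (-μ)` is
nondecreasing on `(0, ∞)`, so `G x ≥ ‖x‖ ^ μ G(x / ‖x‖)` when `‖x‖ ≥ 1` (`rpow_mul_le_of_AR`).
Multiplying by `a t` gives `a t * G x ≥ m ‖x‖ ^ μ` there, and for `‖x‖ ≤ 1` the weaker bound
`a t * G x ≥ m ‖x‖ ^ μ - m` holds because the left side is nonnegative; hence the latter holds for
all `x` (`potential_lower_bound`). Integrating it along `ζ q`, and estimating the forcing term by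
Cauchy–Schwarz (`forcing_le`), yields the upper bound. Since `q` is periodic and not identically
zero, `∫ ‖q‖ ^ μ > 0` over a period (`integral_norm_rpow_pos`), so the term in `|ζ| ^ μ` with
`μ > 2` dominates and the functional tends to `-∞`.
-/

open Real MeasureTheory Filter Topology InnerProductSpace

/-- Superquadratic growth along rays: `s ↦ G(s u) s ^ (-μ)` is nondecreasing on `[1, ∞)`. -/
lemma rpow_mul_le_of_AR {n : ℕ} {G : EuclideanSpace ℝ (Fin n) → ℝ} {μ : ℝ}
    (hG : Differentiable ℝ G)
    (hAR : ∀ x : EuclideanSpace ℝ (Fin n), x ≠ 0 → μ * G x ≤ ⟪gradient G x, x⟫_ℝ)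
    {u : EuclideanSpace ℝ (Fin n)} (hu : u ≠ 0) {r : ℝ} (hr : 1 ≤ r) :
    r ^ μ * G u ≤ G (r • u) := by
  have hder : ∀ s : ℝ, 0 < s → HasDerivAt (fun s : ℝ => G (s • u) * s ^ (-μ))
      (⟪gradient G (s • u), u⟫_ℝ * s ^ (-μ) + G (s • u) * (-μ * s ^ (-μ - 1))) s := by
    intro s hs
    have h1 : HasDerivAt (fun s : ℝ => s • u) u s := by
      simpa using (hasDerivAt_id s).smul_const u
    have h2 := (hG (s • u)).hasGradientAt.hasFDerivAt.comp_hasDerivAt s h1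
    have h3 := Real.hasDerivAt_rpow_const (x := s) (p := -μ) (Or.inl hs.ne')
    have h4 := h2.mul h3
    simp only [InnerProductSpace.toDual_apply_apply] at h4
    exact h4
  have hmono : MonotoneOn (fun s : ℝ => G (s • u) * s ^ (-μ)) (Set.Ici 1) := by
    refine monotoneOn_of_deriv_nonneg (convex_Ici 1) ?_ ?_ ?_
    · intro s hs
      exact (hder s (zero_lt_one.trans_le hs)).continuousAt.continuousWithinAt
    · intro s hs
      rw [interior_Ici] at hs
      exact (hder s (zero_lt_one.trans hs)).differentiableAt.differentiableWithinAt
    · intro s hs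
      rw [interior_Ici] at hs
      have hs0 : 0 < s := zero_lt_one.trans hs
      rw [(hder s hs0).deriv]
      have h := hAR (s • u) (smul_ne_zero hs0.ne' hu)
      rw [inner_smul_right] at h
      have e : s ^ (-μ) = s * s ^ (-μ - 1) := by
        rw [Real.rpow_sub_one hs0.ne']; field_simp
      have hp : 0 < s ^ (-μ - 1) := Real.rpow_pos_of_pos hs0 _
      rw [e]
      have := mul_nonneg (sub_nonneg.2 h) hp.le
      linarith
  have h := hmono (Set.mem_Ici.2 le_rfl) (Set.mem_Ici.2 hr) hr
  have hr0 : 0 < r := zero_lt_one.trans_le hr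
  simp only [one_smul, Real.one_rpow, mul_one, Real.rpow_neg hr0.le] at h
  have hp : 0 < r ^ μ := Real.rpow_pos_of_pos hr0 _
  rw [← div_eq_mul_inv, le_div_iff₀ hp] at h
  linarith

/-- The pointwise bound on the potential term, uniform in `t`; the loss `- m` only serves to cover
the unit ball, where `a t * G x` may be smaller than `m ‖x‖ ^ μ`. -/
lemma potential_lower_bound {n : ℕ} {G : EuclideanSpace ℝ (Fin n) → ℝ} {a : ℝ → ℝ} {μ m : ℝ}
    (hG : Differentiable ℝ G) (hG0 : G 0 = 0) (hμ : 2 < μ)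
    (hAR : ∀ x : EuclideanSpace ℝ (Fin n), x ≠ 0 →
      0 < μ * G x ∧ μ * G x ≤ ⟪gradient G x, x⟫_ℝ)
    (hmdef : m = sInf {y : ℝ | ∃ t : ℝ, ∃ x : EuclideanSpace ℝ (Fin n), ‖x‖ = 1 ∧ y = a t * G x})
    (hm : 0 < m) (t : ℝ) (x : EuclideanSpace ℝ (Fin n)) :
    m * ‖x‖ ^ μ - m ≤ a t * G x := by
  -- The infimum of a set of reals unbounded below is `0` by convention, excluded by `0 < m`.
  have hbdd : BddBelow {y : ℝ | ∃ t : ℝ, ∃ x : EuclideanSpace ℝ (Fin n),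
      ‖x‖ = 1 ∧ y = a t * G x} := by
    by_contra h
    rw [Real.sInf_of_not_bddBelow h] at hmdef
    exact hm.ne' hmdef
  rcases eq_or_ne x 0 with rfl | hx
  · rw [hG0, norm_zero, Real.zero_rpow (by linarith)]
    linarith
  have hpos : ∀ y : EuclideanSpace ℝ (Fin n), y ≠ 0 → 0 < G y := fun y hy =>
    pos_of_mul_pos_right (hAR y hy).1 (by linarith)
  have hx0 : 0 < ‖x‖ := norm_pos_iff.2 hx
  have hu1 : ‖‖x‖⁻¹ • x‖ = 1 := by
    rw [norm_smul, norm_inv, norm_norm, inv_mul_cancel₀ hx0.ne']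
  have hu0 : ‖x‖⁻¹ • x ≠ 0 := smul_ne_zero (inv_ne_zero hx0.ne') hx
  have hmle : m ≤ a t * G (‖x‖⁻¹ • x) := by
    rw [hmdef]
    exact csInf_le hbdd ⟨t, _, hu1, rfl⟩
  have hat : 0 < a t := pos_of_mul_pos_left (hm.trans_le hmle) (hpos _ hu0).le
  rcases le_total ‖x‖ 1 with h1 | h1
  · have h2 : ‖x‖ ^ μ ≤ 1 := Real.rpow_le_one hx0.le h1 (by linarith)
    have h3 := mul_pos hat (hpos x hx)
    nlinarith
  · have h2 := rpow_mul_le_of_AR hG (fun y hy => (hAR y hy).2) hu0 h1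
    rw [smul_inv_smul₀ hx0.ne'] at h2
    have hp : 0 ≤ ‖x‖ ^ μ := (Real.rpow_pos_of_pos hx0 _).le
    have h3 := mul_le_mul_of_nonneg_left h2 hat.le
    have h4 := mul_le_mul_of_nonneg_right hmle hp
    linarith

/-- Cauchy–Schwarz on `[-k, k]`, with the norm of `f` enlarged to the whole line. -/
lemma forcing_le {n : ℕ} {f q : ℝ → EuclideanSpace ℝ (Fin n)}
    (hf : Continuous f) (hf2 : Integrable (fun t => ‖f t‖ ^ 2))
    (hq : ContDiff ℝ 1 q) {k : ℝ} (hk : 0 ≤ k) :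
    |∫ t in (-k)..k, ⟪f t, q t⟫_ℝ| ≤ Real.sqrt (∫ t : ℝ, ‖f t‖ ^ 2) *
      Real.sqrt (∫ t in (-k)..k, (‖q t‖ ^ 2 + ‖deriv q t‖ ^ 2)) := by
  have hkk : -k ≤ k := by linarith
  have hqc : Continuous q := hq.continuous
  have hdq : Continuous (deriv q) := hq.continuous_deriv le_rfl
  have hA : (∫ t in (-k)..k, ‖f t‖ ^ 2) ≤ ∫ t : ℝ, ‖f t‖ ^ 2 := by
    rw [intervalIntegral.integral_of_le hkk]
    exact setIntegral_le_integral hf2 (Eventually.of_forall fun t => by positivity)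
  have hB : (∫ t in (-k)..k, ‖q t‖ ^ 2) ≤ ∫ t in (-k)..k, (‖q t‖ ^ 2 + ‖deriv q t‖ ^ 2) := by
    apply intervalIntegral.integral_mono_on hkk
      ((by fun_prop : Continuous fun t => ‖q t‖ ^ 2).intervalIntegrable _ _)
      ((by fun_prop : Continuous fun t => ‖q t‖ ^ 2 + ‖deriv q t‖ ^ 2).intervalIntegrable _ _)
    intro t _
    nlinarith [sq_nonneg ‖deriv q t‖]
  -- Nonnegativity of `s ↦ ∫ ‖s f + q‖²` makes its discriminant nonpositive.
  have hquad : ∀ s : ℝ, 0 ≤ (∫ t in (-k)..k, ‖f t‖ ^ 2) * (s * s) +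
      (2 * ∫ t in (-k)..k, ⟪f t, q t⟫_ℝ) * s + ∫ t in (-k)..k, ‖q t‖ ^ 2 := by
    intro s
    have h0 : 0 ≤ ∫ t in (-k)..k, ‖s • f t + q t‖ ^ 2 :=
      intervalIntegral.integral_nonneg hkk fun t _ => by positivity
    have e : (fun t => ‖s • f t + q t‖ ^ 2) = fun t =>
        (s * s) * ‖f t‖ ^ 2 + (2 * s) * ⟪f t, q t⟫_ℝ + ‖q t‖ ^ 2 := by
      funext t
      rw [norm_add_sq_real, norm_smul, inner_smul_left, mul_pow, Real.norm_eq_abs, sq_abs]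
      simp only [conj_trivial]
      ring
    rw [e, intervalIntegral.integral_add, intervalIntegral.integral_add,
      intervalIntegral.integral_const_mul, intervalIntegral.integral_const_mul] at h0
    · linarith
    all_goals exact Continuous.intervalIntegrable (by fun_prop) _ _
  have hd := discrim_le_zero hquad
  unfold discrim at hd
  have hA0 : 0 ≤ ∫ t in (-k)..k, ‖f t‖ ^ 2 :=
    intervalIntegral.integral_nonneg hkk fun t _ => by positivity
  have hB0 : 0 ≤ ∫ t in (-k)..k, ‖q t‖ ^ 2 :=
    intervalIntegral.integral_nonneg hkk fun t _ => by positivity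
  rw [← Real.sqrt_mul (hA0.trans hA)]
  apply Real.abs_le_sqrt
  have := mul_le_mul hA hB hB0 (hA0.trans hA)
  nlinarith

lemma integral_norm_rpow_pos {n : ℕ} {q : ℝ → EuclideanSpace ℝ (Fin n)} {μ k : ℝ}
    (hμ : 0 < μ) (hk : 0 < k) (hq : Continuous q) (hper : Function.Periodic q (2 * k))
    (hq0 : q ≠ 0) : 0 < ∫ t in (-k)..k, ‖q t‖ ^ μ := by
  obtain ⟨t₀, ht₀⟩ : ∃ t, q t ≠ 0 := by
    by_contra! h
    exact hq0 (funext h)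
  obtain ⟨y, hy, hyq⟩ := hper.exists_mem_Ico (by linarith : 0 < 2 * k) t₀ (-k)
  have hc : Continuous fun t => ‖q t‖ ^ μ :=
    hq.norm.rpow_const fun _ => Or.inr hμ.le
  refine intervalIntegral.integral_pos (by linarith) hc.continuousOn
    (fun t _ => by positivity) ⟨y, ⟨hy.1, by linarith [hy.2]⟩, ?_⟩
  exact Real.rpow_pos_of_pos (norm_pos_iff.2 (hyq ▸ ht₀)) _

/-- The power `s ^ μ` with `μ > 2` dominates a quadratic polynomial. -/
lemma tendsto_quadratic_sub_rpow {μ A B C D : ℝ} (hμ : 2 < μ) (hB : 0 < B) :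
    Tendsto (fun s : ℝ => A * s ^ 2 - B * s ^ μ + C * s + D) atTop atBot := by
  have hz : ∀ p : ℝ, 0 < p → Tendsto (fun s : ℝ => s ^ (-p)) atTop (𝓝 0) :=
    fun p hp => tendsto_rpow_neg_atTop hp
  have hlim : Tendsto (fun s : ℝ => A * s ^ (-(μ - 2)) - B + C * s ^ (-(μ - 1)) + D * s ^ (-μ))
      atTop (𝓝 (-B)) := by
    have := ((((hz (μ - 2) (by linarith)).const_mul A).sub_const B).add
      ((hz (μ - 1) (by linarith)).const_mul C)).add ((hz μ (by linarith)).const_mul D)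
    simpa using this
  have h := (tendsto_rpow_atTop (by linarith : 0 < μ)).atTop_mul_neg (neg_lt_zero.2 hB) hlim
  refine h.congr' ?_
  filter_upwards [eventually_gt_atTop 0] with s hs
  have e2 : s ^ μ * s ^ (-(μ - 2)) = s ^ 2 := by
    rw [← Real.rpow_add hs, ← Real.rpow_natCast]; congr 1; push_cast; ring
  have e1 : s ^ μ * s ^ (-(μ - 1)) = s := by
    rw [← Real.rpow_add hs]
    convert Real.rpow_one s using 2
    ring
  have e0 : s ^ μ * s ^ (-μ) = 1 := by
    rw [← Real.rpow_add hs]; simp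
  linear_combination A * e2 + C * e1 + D * e0

/-- Mountain pass geometry, condition (iv): the upper bound
`I_k(ζq) ≤ (ζ²/2)‖q‖²_{E_k} − m|ζ|^μ ∫|q|^μ + |ζ|‖f‖_{L²}‖q‖_{E_k} + 2km`,
and consequently `I_k(ζq) → −∞` as `|ζ| → ∞`. -/
theorem functional_scaling_upper_bound_and_tendsto_atBot
    (n : ℕ) (G : EuclideanSpace ℝ (Fin n) → ℝ) (a : ℝ → ℝ)
    (f : ℝ → EuclideanSpace ℝ (Fin n)) (μ m : ℝ)
    (hG : Differentiable ℝ G)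
    (hG0 : G 0 = 0)
    (hμ : 2 < μ)
    (hAR : ∀ x : EuclideanSpace ℝ (Fin n), x ≠ 0 →
      0 < μ * G x ∧ μ * G x ≤ ⟪gradient G x, x⟫_ℝ)
    (ha : Continuous a)
    (hmdef : m = sInf {y : ℝ | ∃ t : ℝ, ∃ x : EuclideanSpace ℝ (Fin n), ‖x‖ = 1 ∧ y = a t * G x})
    (hm : 0 < m)
    (hfc : Continuous f)
    (hf2 : Integrable (fun t => ‖f t‖ ^ 2))
    (k : ℕ) (hk : 1 ≤ k)
    (q : ℝ → EuclideanSpace ℝ (Fin n))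
    (hq : ContDiff ℝ 1 q)
    (hqper : Function.Periodic q (2 * (k : ℝ)))
    (hq0 : q ≠ 0) :
    (∀ ζ : ℝ, ζ ≠ 0 →
      (1 / 2) * (∫ t in (-(k : ℝ))..(k : ℝ), (‖ζ • q t‖ ^ 2 + ‖deriv (fun s => ζ • q s) t‖ ^ 2)) -
          (∫ t in (-(k : ℝ))..(k : ℝ), a t * G (ζ • q t)) +
          (∫ t in (-(k : ℝ))..(k : ℝ), ⟪f t, ζ • q t⟫_ℝ) ≤
        (ζ ^ 2 / 2) * (∫ t in (-(k : ℝ))..(k : ℝ), (‖q t‖ ^ 2 + ‖deriv q t‖ ^ 2)) -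
          m * |ζ| ^ μ * (∫ t in (-(k : ℝ))..(k : ℝ), ‖q t‖ ^ μ) +
          |ζ| * Real.sqrt (∫ t : ℝ, ‖f t‖ ^ 2) *
            Real.sqrt (∫ t in (-(k : ℝ))..(k : ℝ), (‖q t‖ ^ 2 + ‖deriv q t‖ ^ 2)) +
          2 * (k : ℝ) * m) ∧
    Tendsto (fun ζ : ℝ =>
        (1 / 2) * (∫ t in (-(k : ℝ))..(k : ℝ), (‖ζ • q t‖ ^ 2 + ‖deriv (fun s => ζ • q s) t‖ ^ 2)) -
          (∫ t in (-(k : ℝ))..(k : ℝ), a t * G (ζ • q t)) +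
          (∫ t in (-(k : ℝ))..(k : ℝ), ⟪f t, ζ • q t⟫_ℝ))
      (Filter.cocompact ℝ) atBot := by
  have hk0 : (0 : ℝ) < k := by exact_mod_cast hk
  have hkk : -(k : ℝ) ≤ k := by linarith
  have hqc : Continuous q := hq.continuous
  have hub : ∀ ζ : ℝ, ζ ≠ 0 →
      (1 / 2) * (∫ t in (-(k : ℝ))..(k : ℝ), (‖ζ • q t‖ ^ 2 + ‖deriv (fun s => ζ • q s) t‖ ^ 2)) -
          (∫ t in (-(k : ℝ))..(k : ℝ), a t * G (ζ • q t)) +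
          (∫ t in (-(k : ℝ))..(k : ℝ), ⟪f t, ζ • q t⟫_ℝ) ≤
        (ζ ^ 2 / 2) * (∫ t in (-(k : ℝ))..(k : ℝ), (‖q t‖ ^ 2 + ‖deriv q t‖ ^ 2)) -
          m * |ζ| ^ μ * (∫ t in (-(k : ℝ))..(k : ℝ), ‖q t‖ ^ μ) +
          |ζ| * Real.sqrt (∫ t : ℝ, ‖f t‖ ^ 2) *
            Real.sqrt (∫ t in (-(k : ℝ))..(k : ℝ), (‖q t‖ ^ 2 + ‖deriv q t‖ ^ 2)) +
          2 * (k : ℝ) * m := by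
    intro ζ _
    have hkin : (∫ t in (-(k : ℝ))..(k : ℝ),
        (‖ζ • q t‖ ^ 2 + ‖deriv (fun s => ζ • q s) t‖ ^ 2)) =
        ζ ^ 2 * ∫ t in (-(k : ℝ))..(k : ℝ), (‖q t‖ ^ 2 + ‖deriv q t‖ ^ 2) := by
      rw [← intervalIntegral.integral_const_mul]
      congr 1
      funext t
      rw [deriv_fun_const_smul ζ (hq.differentiable one_ne_zero t), norm_smul, norm_smul,
        mul_pow, mul_pow, Real.norm_eq_abs, sq_abs]
      ring
    have hforce : (∫ t in (-(k : ℝ))..(k : ℝ), ⟪f t, ζ • q t⟫_ℝ) =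
        ζ * ∫ t in (-(k : ℝ))..(k : ℝ), ⟪f t, q t⟫_ℝ := by
      simp only [inner_smul_right, intervalIntegral.integral_const_mul]
    have hCS : ζ * (∫ t in (-(k : ℝ))..(k : ℝ), ⟪f t, q t⟫_ℝ) ≤
        |ζ| * (Real.sqrt (∫ t : ℝ, ‖f t‖ ^ 2) *
          Real.sqrt (∫ t in (-(k : ℝ))..(k : ℝ), (‖q t‖ ^ 2 + ‖deriv q t‖ ^ 2))) := by
      refine (le_abs_self _).trans ?_
      rw [abs_mul]
      exact mul_le_mul_of_nonneg_left (forcing_le hfc hf2 hq hk0.le) (abs_nonneg ζ)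
    have hc : Continuous fun t => ‖q t‖ ^ μ :=
      hqc.norm.rpow_const fun _ => Or.inr (by linarith)
    have hGc : Continuous G := hG.continuous
    have hpot : m * |ζ| ^ μ * (∫ t in (-(k : ℝ))..(k : ℝ), ‖q t‖ ^ μ) - 2 * (k : ℝ) * m ≤
        ∫ t in (-(k : ℝ))..(k : ℝ), a t * G (ζ • q t) := by
      have h : (∫ t in (-(k : ℝ))..(k : ℝ), (m * |ζ| ^ μ * ‖q t‖ ^ μ - m)) ≤
          ∫ t in (-(k : ℝ))..(k : ℝ), a t * G (ζ • q t) := by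
        apply intervalIntegral.integral_mono_on hkk
          ((by fun_prop : Continuous fun t => m * |ζ| ^ μ * ‖q t‖ ^ μ - m).intervalIntegrable _ _)
          ((by fun_prop : Continuous fun t => a t * G (ζ • q t)).intervalIntegrable _ _)
        intro t _
        have h := potential_lower_bound hG hG0 hμ hAR hmdef hm t (ζ • q t)
        rw [norm_smul, Real.norm_eq_abs, Real.mul_rpow (abs_nonneg _) (norm_nonneg _)] at h
        linarith
      rw [intervalIntegral.integral_sub ((hc.const_mul _).intervalIntegrable _ _)
        (continuous_const.intervalIntegrable _ _), intervalIntegral.integral_const_mul,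
        intervalIntegral.integral_const, smul_eq_mul] at h
      linarith
    rw [hkin, hforce]
    linarith
  refine ⟨hub, ?_⟩
  have hP := integral_norm_rpow_pos (by linarith : 0 < μ) hk0 hqc hqper hq0
  have hnorm : Tendsto (fun ζ : ℝ => |ζ|) (cocompact ℝ) atTop :=
    tendsto_norm_cocompact_atTop (E := ℝ)
  have hlim := (tendsto_quadratic_sub_rpow
    (A := (∫ t in (-(k : ℝ))..(k : ℝ), (‖q t‖ ^ 2 + ‖deriv q t‖ ^ 2)) / 2)
    (C := Real.sqrt (∫ t : ℝ, ‖f t‖ ^ 2) *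
      Real.sqrt (∫ t in (-(k : ℝ))..(k : ℝ), (‖q t‖ ^ 2 + ‖deriv q t‖ ^ 2)))
    (D := 2 * (k : ℝ) * m) hμ (mul_pos hm hP)).comp hnorm
  refine tendsto_atBot_mono' _ ?_ hlim
  filter_upwards [hnorm.eventually_gt_atTop 0] with ζ hζ
  refine (hub ζ (abs_pos.1 hζ)).trans (le_of_eq ?_)
  simp only [Function.comp_apply, sq_abs]
  ring
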